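/- (Approximation lemma) Let α, B > 0, let f₀ ∈ 𝔠^{α,B}([0,1]^p) be in the α-Hölder class with envelope B, let m ≥ α be the polynomial degree, fix 1 < h̲ < h̄ < ∞, and let P_x be a distribution on [0,1]^p with density p_x bounded above by p̄ < ∞. Then there exists a constant C₁ > 0 (depending only on α, B, p, m, h̲, h̄, p̄) such that for all sufficiently small ε > 0 the following holds: for every integer K ≥ ε^{−1/α}, every bandwidth h with Kh ∈ [h̲, h̄], every choice of centers μ_k ∈ X_K(k), and every coefficient array (ξ_{ks}) with |ξ_{ks}| ≤ B for all k ∈ [K]^p and |s| ≤ m which satisfies max_{k ∈ [K]^p} max_{|s| ≤ ⌈α−1⌉} |ξ_{ks} − D^s f₀(μ_k^⋆)/(s_1!⋯s_p!)| ≤ ε, the function f(x) = Σ_{k ∈ [K]^p} Σ_{s : |s| ≤ m} ξ_{ks} ψ_{ks}(x) satisfies ∫_{[0,1]^p} (f(x) − f₀(x))² p_x(x) dx < C₁ ε². -/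

import Mathlib

open MeasureTheory Filter Real Matrix
open scoped ENNReal NNReal BigOperators Classical

noncomputable section

namespace KMP

/-- The unit hypercube `[0,1]^p`. -/
def cube (p : ℕ) : Set (Fin p → ℝ) := {x | ∀ j, 0 ≤ x j ∧ x j ≤ 1}

/-- A boxed kernel: continuous, `[0,1]`-valued, supported on the closed unit sup-norm ball,
nonincreasing in the sup-norm (`‖·‖` on `Fin p → ℝ` is the sup-norm). -/
def IsBoxedKernel {p : ℕ} (φ : (Fin p → ℝ) → ℝ) : Prop :=
  Continuous φ ∧ (∀ u, 0 ≤ φ u ∧ φ u ≤ 1) ∧ (∀ u, 1 < ‖u‖ → φ u = 0) ∧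
    ∀ u v, ‖u‖ ≤ ‖v‖ → φ v ≤ φ u

/-- The block `X_K(k) = ∏_j ((k_j-1)/K, k_j/K]`; here `k j : Fin K` encodes `k_j - 1`. -/
def block {p : ℕ} (K : ℕ) (k : Fin p → Fin K) : Set (Fin p → ℝ) :=
  {x | ∀ j, ((k j : ℕ) : ℝ) / K < x j ∧ x j ≤ (((k j : ℕ) : ℝ) + 1) / K}

/-- The closure of the block `X_K(k)`. -/
def blockCl {p : ℕ} (K : ℕ) (k : Fin p → Fin K) : Set (Fin p → ℝ) :=
  {x | ∀ j, ((k j : ℕ) : ℝ) / K ≤ x j ∧ x j ≤ (((k j : ℕ) : ℝ) + 1) / K}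

/-- The center `μ_k^⋆` of the block `X_K(k)`. -/
def center {p : ℕ} (K : ℕ) (k : Fin p → Fin K) : Fin p → ℝ :=
  fun j => (2 * ((k j : ℕ) : ℝ) + 1) / (2 * K)

/-- Multi-indices `s ∈ {0,…,m}^p` with `|s| ≤ m`. -/
def mIdx (p m : ℕ) : Finset (Fin p → Fin (m + 1)) :=
  Finset.univ.filter fun s => (∑ j, (s j : ℕ)) ≤ m

/-- Degree `|s|` of a multi-index. -/
def deg {p m : ℕ} (s : Fin p → Fin (m + 1)) : ℕ := ∑ j, (s j : ℕ)

/-- Kernel mixture weight `w_k(x) = φ_h(x-μ_k) / ∑_l φ_h(x-μ_l)`. -/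
def weight {p : ℕ} (φ : (Fin p → ℝ) → ℝ) (K : ℕ) (h : ℝ)
    (μ : (Fin p → Fin K) → Fin p → ℝ) (k : Fin p → Fin K) (x : Fin p → ℝ) : ℝ :=
  φ (fun j => (x j - μ k j) / h) / ∑ l : Fin p → Fin K, φ (fun j => (x j - μ l j) / h)

/-- Monomial `(x - μ_k^⋆)^s`. -/
def mono {p : ℕ} (K m : ℕ) (k : Fin p → Fin K) (s : Fin p → Fin (m + 1))
    (x : Fin p → ℝ) : ℝ :=
  ∏ j, (x j - center K k j) ^ (s j : ℕ)

/-- A kernel mixture of polynomials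
`f(x) = ∑_k ∑_{|s| ≤ m} ξ_{ks} w_k(x) (x - μ_k^⋆)^s`. -/
def kmpFun {p : ℕ} (φ : (Fin p → ℝ) → ℝ) (K m : ℕ) (h : ℝ)
    (μ : (Fin p → Fin K) → Fin p → ℝ)
    (ξ : (Fin p → Fin K) → (Fin p → Fin (m + 1)) → ℝ) (x : Fin p → ℝ) : ℝ :=
  ∑ k : Fin p → Fin K, ∑ s ∈ mIdx p m, ξ k s * weight φ K h μ k x * mono K m k s x

/-- Partial derivative in the `j`-th coordinate direction. -/
def pderiv1 {p : ℕ} (j : Fin p) (f : (Fin p → ℝ) → ℝ) : (Fin p → ℝ) → ℝ :=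
  fun x => fderiv ℝ f x (Pi.single j 1)

/-- Mixed partial derivative `D^s f`. -/
def mderiv {p : ℕ} (s : Fin p → ℕ) (f : (Fin p → ℝ) → ℝ) : (Fin p → ℝ) → ℝ :=
  (List.finRange p).foldr (fun j g => (pderiv1 j)^[s j] g) f

/-- Degree of an `ℕ`-valued multi-index. -/
def degN {p : ℕ} (s : Fin p → ℕ) : ℕ := ∑ j, s j

/-- Euclidean norm on `Fin p → ℝ`. -/
def eucNorm {p : ℕ} (x : Fin p → ℝ) : ℝ := Real.sqrt (∑ j, (x j) ^ 2)

/-- `⌈α - 1⌉` (as a natural number; it is `0` when `α ≤ 1`). -/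
def hOrder (α : ℝ) : ℕ := ⌈α - 1⌉₊

/-- The α-Hölder class with envelope `B` on `[0,1]^p`: `⌈α-1⌉`-times continuously
differentiable, and the sum of the sup-norm bound on all derivatives of order `≤ ⌈α-1⌉`
and the Hölder constant of the derivatives of order `⌈α-1⌉` is at most `B`. -/
def IsHolder (p : ℕ) (α B : ℝ) (f : (Fin p → ℝ) → ℝ) : Prop :=
  ContDiff ℝ (hOrder α : ℕ∞) f ∧
    ∃ B₁ B₂ : ℝ, 0 ≤ B₁ ∧ 0 ≤ B₂ ∧ B₁ + B₂ ≤ B ∧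
      (∀ s : Fin p → ℕ, degN s ≤ hOrder α → ∀ x ∈ cube p, |mderiv s f x| ≤ B₁) ∧
      (∀ s : Fin p → ℕ, degN s = hOrder α → ∀ x ∈ cube p, ∀ y ∈ cube p, x ≠ y →
        |mderiv s f x - mderiv s f y| ≤ B₂ * eucNorm (x - y) ^ (α - (degN s : ℝ)))

/-- The `N(0, σ²)` density `φ_σ`. -/
def gaussD (σ t : ℝ) : ℝ := (σ * Real.sqrt (2 * π))⁻¹ * Real.exp (-t ^ 2 / (2 * σ ^ 2))

/-!
Since `K h > 1`, every point `x` of the cube satisfies `‖x - μ_k‖ < h` for the `k` whose block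
contains it, so the weights `w_k(x)` are nonnegative and sum to one; hence `f(x) - f₀(x)` is a
convex combination of the local errors `∑_s ξ_{ks} (x - μ_k⋆)^s - f₀(x)`. Only the `k` with
`w_k(x) ≠ 0` count, and these have `‖x - μ_k⋆‖ ≤ (H + 1) / K` where `K h ≤ H`. For such `k` the
local error is `O(ε)`: the coefficients of degree at most `⌈α-1⌉` are `ε`-close to the Taylor
coefficients of `f₀`, while the higher monomials and the Hölder remainder of the Taylor polynomial
are `O(‖x - μ_k⋆‖ ^ α) = O(K ^ (-α)) = O(ε)`.

The Taylor remainder is bounded by induction on the degree: along `t ↦ c + t v`, the derivative of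
the remainder of `f` is `∑_j v_j` times the remainder of `∂_j f`. This uses the symmetry of mixed
partial derivatives, because `D^s` is a fixed ordering of its factors.
-/

section PartialDerivatives

variable {p : ℕ} {f : (Fin p → ℝ) → ℝ}

lemma contDiff_pderiv1 {n : WithTop ℕ∞} (j : Fin p) (hf : ContDiff ℝ (n + 1) f) :
    ContDiff ℝ n (pderiv1 j f) :=
  (hf.fderiv_right le_rfl).clm_apply contDiff_const

lemma pderiv1_comm (i j : Fin p) (hf : ContDiff ℝ 2 f) :
    pderiv1 i (pderiv1 j f) = pderiv1 j (pderiv1 i f) := by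
  have hdiff : Differentiable ℝ (fderiv ℝ f) :=
    (hf.fderiv_right (m := 1) (by norm_num)).differentiable one_ne_zero
  have pderiv1_pderiv1 (a b : Fin p) (x : Fin p → ℝ) : pderiv1 a (pderiv1 b f) x =
      fderiv ℝ (fderiv ℝ f) x (Pi.single a 1) (Pi.single b 1) := by
    unfold pderiv1
    rw [fderiv_clm_apply (hdiff x) (differentiableAt_const _)]
    simp
  funext x
  rw [pderiv1_pderiv1, pderiv1_pderiv1]
  exact hf.contDiffAt.isSymmSndFDerivAt (by simp) _ _

lemma fderiv_apply_eq_sum_pderiv1 (x v : Fin p → ℝ) :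
    fderiv ℝ f x v = ∑ j, v j * pderiv1 j f x := by
  conv_lhs => rw [pi_eq_sum_univ' v, map_sum]
  simp only [map_smul, smul_eq_mul, pderiv1]

lemma contDiff_foldr_pderiv1 (l : List (Fin p)) {n : WithTop ℕ∞}
    (hf : ContDiff ℝ (n + l.length) f) : ContDiff ℝ n (l.foldr pderiv1 f) := by
  induction l generalizing n with
  | nil => simpa using hf
  | cons i l ih =>
    refine contDiff_pderiv1 i (ih ?_)
    rwa [List.length_cons, Nat.cast_add_one, add_comm (l.length : WithTop ℕ∞) 1, ← add_assoc] at hf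

lemma foldr_pderiv1_eq_of_perm {l l' : List (Fin p)} (h : l.Perm l')
    (hf : ContDiff ℝ l.length f) : l.foldr pderiv1 f = l'.foldr pderiv1 f := by
  induction h with
  | nil => rfl
  | cons i _ ih => exact congrArg (pderiv1 i) (ih (hf.of_le (by norm_cast; simp)))
  | swap i j l =>
    refine pderiv1_comm j i (contDiff_foldr_pderiv1 l (hf.of_le ?_))
    norm_cast
    simp only [List.length_cons]
    omega
  | trans h _ ih ih' => exact (ih hf).trans (ih' (h.length_eq ▸ hf))

/-- The directions of differentiation in `D^s`, from the outermost to the innermost: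
`j` is repeated `s j` times. Permutations of this list encode the symmetry of mixed partial
derivatives. -/
def directions (s : Fin p → ℕ) : List (Fin p) :=
  (List.finRange p).flatMap fun j => List.replicate (s j) j

lemma length_directions (s : Fin p → ℕ) : (directions s).length = degN s := by
  simp [directions, List.length_flatMap, degN, Fin.sum_univ_def]

lemma count_directions (s : Fin p → ℕ) (j : Fin p) : (directions s).count j = s j := by
  rw [directions, List.count_flatMap, ← Fin.sum_univ_def]
  simp [List.count_replicate]

lemma mderiv_eq_foldr_directions (s : Fin p → ℕ) (f : (Fin p → ℝ) → ℝ) :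
    mderiv s f = (directions s).foldr pderiv1 f := by
  have foldr_replicate (j : Fin p) (n : ℕ) (g : (Fin p → ℝ) → ℝ) :
      (List.replicate n j).foldr pderiv1 g = (pderiv1 j)^[n] g := by
    induction n with
    | zero => rfl
    | succ n ih => rw [List.replicate_succ, List.foldr_cons, ih, Function.iterate_succ_apply']
  simp only [mderiv, directions, List.foldr_flatMap, foldr_replicate]

lemma mderiv_zero (f : (Fin p → ℝ) → ℝ) : mderiv (0 : Fin p → ℕ) f = f := by
  simp [mderiv]

lemma degN_add_single (s : Fin p → ℕ) (j : Fin p) : degN (s + Pi.single j 1) = degN s + 1 := by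
  simp [degN, Finset.sum_add_distrib]

lemma mderiv_add_single (s : Fin p → ℕ) (j : Fin p) (hf : ContDiff ℝ (degN s + 1 : ℕ) f) :
    mderiv (s + Pi.single j 1) f = mderiv s (pderiv1 j f) := by
  have hperm : (directions (s + Pi.single j 1)).Perm (directions s ++ [j]) := by
    rw [List.perm_iff_count]
    intro i
    rw [List.count_append, count_directions, count_directions]
    simp only [Pi.add_apply, Pi.single_apply, List.count_singleton', eq_comm]
  rw [mderiv_eq_foldr_directions, mderiv_eq_foldr_directions,
    foldr_pderiv1_eq_of_perm hperm (by rwa [length_directions, degN_add_single]),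
    List.foldr_append, List.foldr_cons, List.foldr_nil]

end PartialDerivatives

section TaylorPolynomial

variable {p : ℕ}

/-- The multi-indices `s ∈ ℕ^p` with `|s| ≤ r`. -/
def multiIndices (p r : ℕ) : Finset (Fin p → ℕ) :=
  {s ∈ Finset.Iic fun _ => r | degN s ≤ r}

/-- The factorial `s! = s₁! ⋯ s_p!` of a multi-index. -/
def multiFactorial (s : Fin p → ℕ) : ℝ := ∏ j, (Nat.factorial (s j) : ℝ)

/-- The multi-index power `v^s = v₁^{s₁} ⋯ v_p^{s_p}`. -/
def multiPow (v : Fin p → ℝ) (s : Fin p → ℕ) : ℝ := ∏ j, v j ^ s j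

/-- The Taylor coefficient `D^s f(c) / s!`. -/
def taylorCoeff (f : (Fin p → ℝ) → ℝ) (c : Fin p → ℝ) (s : Fin p → ℕ) : ℝ :=
  mderiv s f c / multiFactorial s

/-- The Taylor polynomial of `f` of degree `r` at `c`, as a function of the increment `v`. -/
def taylorPoly (r : ℕ) (f : (Fin p → ℝ) → ℝ) (c v : Fin p → ℝ) : ℝ :=
  ∑ s ∈ multiIndices p r, taylorCoeff f c s * multiPow v s

lemma le_degN (s : Fin p → ℕ) (j : Fin p) : s j ≤ degN s :=
  Finset.single_le_sum (fun _ _ => Nat.zero_le _) (Finset.mem_univ j)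

lemma mem_multiIndices {r : ℕ} {s : Fin p → ℕ} : s ∈ multiIndices p r ↔ degN s ≤ r := by
  simp only [multiIndices, Finset.mem_filter, Finset.mem_Iic, and_iff_right_iff_imp]
  exact fun h j => (le_degN s j).trans h

lemma multiFactorial_pos (s : Fin p → ℕ) : 0 < multiFactorial s :=
  Finset.prod_pos fun j _ => by exact_mod_cast Nat.factorial_pos (s j)

lemma multiFactorial_add_single (s : Fin p → ℕ) (j : Fin p) :
    multiFactorial (s + Pi.single j 1) = (s j + 1) * multiFactorial s := by
  have hfactor (i : Fin p) : (Nat.factorial ((s + Pi.single j 1 : Fin p → ℕ) i) : ℝ) =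
      (if i = j then (s j + 1 : ℝ) else 1) * Nat.factorial (s i) := by
    split_ifs with hij
    · subst hij
      simp [Nat.factorial_succ]
    · simp [hij]
  simp only [multiFactorial, hfactor, Finset.prod_mul_distrib, Finset.prod_ite_eq',
    Finset.mem_univ, if_true]

lemma multiPow_add_single (v : Fin p → ℝ) (s : Fin p → ℕ) (j : Fin p) :
    multiPow v (s + Pi.single j 1) = v j * multiPow v s := by
  have hpow (i : Fin p) : v i ^ (Pi.single j 1 : Fin p → ℕ) i = if i = j then v i else 1 := by
    rw [Pi.single_apply, pow_ite, pow_one, pow_zero]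
  simp only [multiPow, Pi.add_apply, pow_add, hpow, Finset.prod_mul_distrib, Finset.prod_ite_eq',
    Finset.mem_univ, if_true, mul_comm]

lemma multiPow_smul (t : ℝ) (v : Fin p → ℝ) (s : Fin p → ℕ) :
    multiPow (t • v) s = t ^ degN s * multiPow v s := by
  simp [multiPow, degN, mul_pow, Finset.prod_mul_distrib, Finset.prod_pow_eq_pow_sum]

lemma multiPow_zero_of_ne_zero {s : Fin p → ℕ} (hs : s ≠ 0) : multiPow 0 s = 0 := by
  obtain ⟨j, hj⟩ := Function.ne_iff.1 hs
  exact Finset.prod_eq_zero (Finset.mem_univ j) (zero_pow hj)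

lemma abs_multiPow_le (v : Fin p → ℝ) (s : Fin p → ℕ) : |multiPow v s| ≤ ‖v‖ ^ degN s := by
  rw [multiPow, Finset.abs_prod, degN, ← Finset.prod_pow_eq_pow_sum]
  refine Finset.prod_le_prod (fun _ _ => abs_nonneg _) fun j _ => ?_
  rw [abs_pow]
  exact pow_le_pow_left₀ (abs_nonneg _) (norm_le_pi_norm v j) _

lemma taylorPoly_degree_zero (f : (Fin p → ℝ) → ℝ) (c v : Fin p → ℝ) :
    taylorPoly 0 f c v = f c := by
  have hzero : multiIndices p 0 = {0} := by
    ext s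
    simp [mem_multiIndices, degN, funext_iff]
  simp [taylorPoly, hzero, taylorCoeff, mderiv_zero, multiFactorial, multiPow]

lemma taylorPoly_zero_right (r : ℕ) (f : (Fin p → ℝ) → ℝ) (c : Fin p → ℝ) :
    taylorPoly r f c 0 = f c := by
  rw [taylorPoly, Finset.sum_eq_single 0]
  · simp [taylorCoeff, mderiv_zero, multiFactorial, multiPow]
  · intro s _ hs
    rw [multiPow_zero_of_ne_zero hs, mul_zero]
  · intro h
    simp [mem_multiIndices, degN] at h

lemma sum_multiIndices_succ_div_multiFactorial (r : ℕ) (j : Fin p) (G : (Fin p → ℕ) → ℝ) :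
    ∑ s ∈ multiIndices p (r + 1), s j / multiFactorial s * G s =
      ∑ t ∈ multiIndices p r, G (t + Pi.single j 1) / multiFactorial t := by
  have hcancel (s : Fin p → ℕ) (hs : s j ≠ 0) : s - Pi.single j 1 + Pi.single j 1 = s := by
    refine tsub_add_cancel_of_le fun i => ?_
    rw [Pi.single_apply]
    split_ifs with hij
    exacts [hij ▸ Nat.one_le_iff_ne_zero.2 hs, Nat.zero_le _]
  rw [← Finset.sum_filter_of_ne (p := fun s => s j ≠ 0)
    fun s _ hs hj => hs (by rw [hj, Nat.cast_zero, zero_div, zero_mul])]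
  symm
  refine Finset.sum_nbij' (· + Pi.single j 1) (· - Pi.single j 1) ?_ ?_ ?_ ?_ ?_
  · intro t ht
    simpa [mem_multiIndices, degN_add_single] using ht
  · intro s hs
    rw [Finset.mem_filter, mem_multiIndices] at hs
    have := degN_add_single (s - Pi.single j 1) j
    rw [hcancel s hs.2] at this
    rw [mem_multiIndices]
    omega
  · intro t _
    exact add_tsub_cancel_right t _
  · intro s hs
    exact hcancel s (Finset.mem_filter.1 hs).2
  · intro t _
    have : (0 : ℝ) < t j + 1 := by positivity
    have := multiFactorial_pos t
    rw [multiFactorial_add_single]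
    simp only [Pi.add_apply, Pi.single_eq_same, Nat.cast_add, Nat.cast_one]
    field_simp

lemma hasDerivAt_taylorPoly_smul {r : ℕ} {f : (Fin p → ℝ) → ℝ} (hf : ContDiff ℝ (r + 1 : ℕ) f)
    (c v : Fin p → ℝ) (t : ℝ) :
    HasDerivAt (fun t : ℝ => taylorPoly (r + 1) f c (t • v))
      (∑ j, v j * taylorPoly r (pderiv1 j f) c (t • v)) t := by
  have hterm : HasDerivAt (fun t : ℝ => taylorPoly (r + 1) f c (t • v))
      (∑ s ∈ multiIndices p (r + 1),
        taylorCoeff f c s * (degN s * t ^ (degN s - 1) * multiPow v s)) t := by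
    simp only [taylorPoly, multiPow_smul]
    exact HasDerivAt.fun_sum fun s _ => ((hasDerivAt_pow _ t).mul_const _).const_mul _
  convert hterm using 1
  have hdeg (s : Fin p → ℕ) :
      taylorCoeff f c s * (degN s * t ^ (degN s - 1) * multiPow v s) =
        ∑ j, s j / multiFactorial s * (mderiv s f c * t ^ (degN s - 1) * multiPow v s) := by
    rw [← Finset.sum_mul, ← Finset.sum_div, taylorCoeff, degN]
    push_cast
    ring
  simp only [hdeg]
  rw [Finset.sum_comm]
  refine Finset.sum_congr rfl fun j _ => ?_
  rw [sum_multiIndices_succ_div_multiFactorial r j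
    fun s => mderiv s f c * t ^ (degN s - 1) * multiPow v s, taylorPoly, Finset.mul_sum]
  refine Finset.sum_congr rfl fun s hs => ?_
  have hsr : degN s + 1 ≤ r + 1 := Nat.succ_le_succ (mem_multiIndices.1 hs)
  rw [multiPow_add_single, multiPow_smul, degN_add_single, Nat.add_sub_cancel,
    mderiv_add_single s j (hf.of_le (mod_cast hsr)), taylorCoeff]
  ring

lemma hasDerivAt_sub_taylorPoly_smul {r : ℕ} {f : (Fin p → ℝ) → ℝ}
    (hf : ContDiff ℝ (r + 1 : ℕ) f) (c v : Fin p → ℝ) (t : ℝ) :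
    HasDerivAt (fun t : ℝ => f (c + t • v) - taylorPoly (r + 1) f c (t • v))
      (∑ j, v j * (pderiv1 j f (c + t • v) - taylorPoly r (pderiv1 j f) c (t • v))) t := by
  have hline : HasDerivAt (fun t : ℝ => c + t • v) v t := by
    simpa using ((hasDerivAt_id t).smul_const v).const_add c
  have hdiff : Differentiable ℝ f := hf.differentiable (by norm_cast)
  have hcomp := (hdiff (c + t • v)).hasFDerivAt.comp_hasDerivAt t hline
  rw [fderiv_apply_eq_sum_pderiv1] at hcomp
  simp only [mul_sub, Finset.sum_sub_distrib]
  exact hcomp.sub (hasDerivAt_taylorPoly_smul hf c v t)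

lemma abs_sub_taylorPoly_le {β M : ℝ} (hβ : 0 ≤ β) (hM : 0 ≤ M) {S : Set (Fin p → ℝ)}
    {c : Fin p → ℝ} (hS : StarConvex ℝ c S) (r : ℕ) {f : (Fin p → ℝ) → ℝ} (hf : ContDiff ℝ r f)
    (hosc : ∀ s : Fin p → ℕ, degN s = r → ∀ x ∈ S,
      |mderiv s f x - mderiv s f c| ≤ M * ‖x - c‖ ^ β)
    {v : Fin p → ℝ} (hv : c + v ∈ S) :
    |f (c + v) - taylorPoly r f c v| ≤ p ^ r * M * ‖v‖ ^ (β + r) := by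
  induction r generalizing f v with
  | zero => simpa [taylorPoly_degree_zero, mderiv_zero] using hosc 0 (by simp [degN]) _ hv
  | succ r ih =>
    have hpartial (j : Fin p) {t : ℝ} (ht : t ∈ Set.Ico (0 : ℝ) 1) :
        |pderiv1 j f (c + t • v) - taylorPoly r (pderiv1 j f) c (t • v)| ≤
          p ^ r * M * ‖v‖ ^ (β + r) := by
      have hosc_j (s : Fin p → ℕ) (hs : degN s = r) (x) (hx : x ∈ S) :
          |mderiv s (pderiv1 j f) x - mderiv s (pderiv1 j f) c| ≤ M * ‖x - c‖ ^ β := by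
        rw [← mderiv_add_single s j (hs ▸ hf)]
        exact hosc _ (by rw [degN_add_single, hs]) x hx
      have hsmul : ‖t • v‖ ≤ ‖v‖ := by
        rw [norm_smul, Real.norm_of_nonneg ht.1]
        exact mul_le_of_le_one_left (norm_nonneg v) ht.2.le
      exact (ih (contDiff_pderiv1 j hf) hosc_j (hS.add_smul_mem hv ht.1 ht.2.le)).trans
        (by gcongr)
    have hderiv_le (t : ℝ) (ht : t ∈ Set.Ico (0 : ℝ) 1) :
        ‖∑ j, v j * (pderiv1 j f (c + t • v) - taylorPoly r (pderiv1 j f) c (t • v))‖ ≤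
          p ^ (r + 1) * M * ‖v‖ ^ (β + (r + 1 : ℕ)) := by
      calc _ ≤ ∑ _j : Fin p, ‖v‖ * (p ^ r * M * ‖v‖ ^ (β + r)) := by
            refine norm_sum_le_of_le _ fun j _ => ?_
            rw [norm_mul]
            gcongr
            exacts [norm_le_pi_norm v j, hpartial j ht]
        _ = p ^ (r + 1) * M * ‖v‖ ^ (β + (r + 1 : ℕ)) := by
            rw [Nat.cast_add_one, ← add_assoc,
              Real.rpow_add_one' (norm_nonneg v) (by positivity), Finset.sum_const,
              Finset.card_univ, Fintype.card_fin, nsmul_eq_mul]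
            ring
    have hmvt := norm_image_sub_le_of_norm_deriv_le_segment_01'
      (fun t _ => (hasDerivAt_sub_taylorPoly_smul hf c v t).hasDerivWithinAt) hderiv_le
    simpa [taylorPoly_zero_right] using hmvt

end TaylorPolynomial

section HolderClass

variable {p : ℕ} {α B : ℝ}

lemma cube_eq_Icc (p : ℕ) : cube p = Set.Icc 0 1 := by
  ext x
  exact forall_and

lemma norm_sub_le_one_of_mem_cube {x y : Fin p → ℝ} (hx : x ∈ cube p) (hy : y ∈ cube p) :
    ‖x - y‖ ≤ 1 := by
  refine (pi_norm_le_iff_of_nonneg zero_le_one).2 fun j => abs_le.2 ?_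
  have := hx j
  have := hy j
  constructor <;> simp only [Pi.sub_apply] <;> linarith

lemma hOrder_lt (hα : 0 < α) : (hOrder α : ℝ) < α := by
  rcases le_or_gt α 1 with h | h
  · simpa [hOrder, Nat.ceil_eq_zero.2 (sub_nonpos.2 h)] using hα
  · have := Nat.ceil_lt_add_one (sub_pos.2 h).le
    rw [hOrder]
    linarith

lemma le_hOrder_add_one (α : ℝ) : α ≤ hOrder α + 1 :=
  sub_le_iff_le_add.1 (Nat.le_ceil (α - 1))

lemma eucNorm_le_sqrt_mul_norm (x : Fin p → ℝ) : eucNorm x ≤ √p * ‖x‖ := by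
  rw [eucNorm, ← Real.sqrt_sq (norm_nonneg x), ← Real.sqrt_mul (Nat.cast_nonneg p)]
  refine Real.sqrt_le_sqrt ?_
  calc ∑ j, x j ^ 2 ≤ ∑ _j : Fin p, ‖x‖ ^ 2 :=
        Finset.sum_le_sum fun j _ => sq_le_sq' (neg_le_of_abs_le (norm_le_pi_norm x j))
          (le_of_abs_le (norm_le_pi_norm x j))
    _ = p * ‖x‖ ^ 2 := by simp

lemma IsHolder.envelope_nonneg {f : (Fin p → ℝ) → ℝ} (hf : IsHolder p α B f) : 0 ≤ B := by
  obtain ⟨-, B₁, B₂, hB₁, hB₂, hB, -⟩ := hf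
  linarith

/-- The constant in front of `‖x - c‖ ^ α` in the Taylor remainder estimate for the Hölder class.
The factor `√p ^ (α - ⌈α-1⌉)` converts the Euclidean norm of `IsHolder` to the sup norm. -/
def taylorConst (p : ℕ) (α B : ℝ) : ℝ := p ^ hOrder α * (B * √p ^ (α - hOrder α))

lemma IsHolder.abs_sub_taylorPoly_le (hα : 0 < α) {f : (Fin p → ℝ) → ℝ} (hf : IsHolder p α B f)
    {c x : Fin p → ℝ} (hc : c ∈ cube p) (hx : x ∈ cube p) :
    |f x - taylorPoly (hOrder α) f c (x - c)| ≤ taylorConst p α B * ‖x - c‖ ^ α := by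
  have hB : 0 ≤ B := hf.envelope_nonneg
  obtain ⟨hsmooth, B₁, B₂, hB₁, -, hB₁₂, -, hhol⟩ := hf
  have hβ : 0 < α - hOrder α := sub_pos.2 (hOrder_lt hα)
  have hosc (s : Fin p → ℕ) (hs : degN s = hOrder α) (y) (hy : y ∈ cube p) :
      |mderiv s f y - mderiv s f c| ≤ B * √p ^ (α - hOrder α) * ‖y - c‖ ^ (α - hOrder α) := by
    rcases eq_or_ne y c with rfl | hyc
    · simp [Real.zero_rpow hβ.ne']
    calc |mderiv s f y - mderiv s f c| ≤ B₂ * eucNorm (y - c) ^ (α - hOrder α) :=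
          hs ▸ hhol s hs y hy c hc hyc
      _ ≤ B * (√p * ‖y - c‖) ^ (α - hOrder α) :=
          mul_le_mul (by linarith)
            (Real.rpow_le_rpow (Real.sqrt_nonneg _) (eucNorm_le_sqrt_mul_norm _) hβ.le)
            (Real.rpow_nonneg (Real.sqrt_nonneg _) _) hB
      _ = B * √p ^ (α - hOrder α) * ‖y - c‖ ^ (α - hOrder α) := by
          rw [Real.mul_rpow (Real.sqrt_nonneg _) (norm_nonneg _), mul_assoc]
  have hstar : StarConvex ℝ c (cube p) := cube_eq_Icc p ▸ (convex_Icc 0 1) (cube_eq_Icc p ▸ hc)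
  have := KMP.abs_sub_taylorPoly_le hβ.le (by positivity) hstar (hOrder α) (mod_cast hsmooth) hosc
    (v := x - c) (by simpa using hx)
  simpa [taylorConst] using this

end HolderClass

section LocalPolynomial

variable {p m : ℕ}

/-- The polynomial `∑_{|s| ≤ m} ξ_s v^s` attached to one component of a kernel mixture. -/
def localPoly (ξ : (Fin p → Fin (m + 1)) → ℝ) (v : Fin p → ℝ) : ℝ :=
  ∑ s ∈ mIdx p m, ξ s * multiPow v (fun j => s j)

lemma taylorPoly_eq_sum_mIdx {r : ℕ} (hr : r ≤ m) (f : (Fin p → ℝ) → ℝ) (c v : Fin p → ℝ) :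
    taylorPoly r f c v =
      ∑ s ∈ mIdx p m with deg s ≤ r,
        taylorCoeff f c (fun j => s j) * multiPow v (fun j => s j) := by
  symm
  refine Finset.sum_nbij (fun s j => (s j : ℕ)) ?_ ?_ ?_ fun _ _ => rfl
  · intro s hs
    exact mem_multiIndices.2 (Finset.mem_filter.1 hs).2
  · intro s _ t _ hst
    exact funext fun j => Fin.ext (congrFun hst j)
  · intro s hs
    have hsr : degN s ≤ r := mem_multiIndices.1 hs
    refine ⟨fun j => ⟨s j, Nat.lt_succ_of_le ((le_degN s j).trans (hsr.trans hr))⟩, ?_, rfl⟩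
    exact Finset.mem_filter.2
      ⟨Finset.mem_filter.2 ⟨Finset.mem_univ _, hsr.trans hr⟩, hsr⟩

lemma abs_localPoly_sub_taylorPoly_le {r : ℕ} (hr : r ≤ m) {f : (Fin p → ℝ) → ℝ}
    {c v : Fin p → ℝ} (hv : ‖v‖ ≤ 1) {ξ : (Fin p → Fin (m + 1)) → ℝ} {B ε : ℝ} (hB : 0 ≤ B)
    (hε : 0 ≤ ε) (hξ : ∀ s ∈ mIdx p m, |ξ s| ≤ B)
    (hξ' : ∀ s ∈ mIdx p m, deg s ≤ r → |ξ s - taylorCoeff f c (fun j => s j)| ≤ ε) :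
    |localPoly ξ v - taylorPoly r f c v| ≤ (mIdx p m).card * (ε + B * ‖v‖ ^ (r + 1)) := by
  rw [taylorPoly_eq_sum_mIdx hr, Finset.sum_filter, localPoly, ← Finset.sum_sub_distrib,
    ← nsmul_eq_mul]
  refine (Finset.abs_sum_le_sum_abs _ _).trans (Finset.sum_le_card_nsmul _ _ _ fun s hs => ?_)
  have hpow : |multiPow v (fun j => s j)| ≤ ‖v‖ ^ deg s := abs_multiPow_le v _
  split_ifs with hdeg
  · rw [← sub_mul, abs_mul]
    calc _ ≤ ε * 1 := mul_le_mul (hξ' s hs hdeg)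
          (hpow.trans (pow_le_one₀ (norm_nonneg v) hv)) (abs_nonneg _) hε
      _ ≤ ε + B * ‖v‖ ^ (r + 1) := by
          rw [mul_one]
          exact le_add_of_nonneg_right (by positivity)
  · rw [sub_zero, abs_mul]
    calc _ ≤ B * ‖v‖ ^ (r + 1) := mul_le_mul (hξ s hs)
          (hpow.trans (pow_le_pow_of_le_one (norm_nonneg v) hv (not_le.1 hdeg)))
          (abs_nonneg _) hB
      _ ≤ ε + B * ‖v‖ ^ (r + 1) := le_add_of_nonneg_left hε

lemma IsHolder.abs_localPoly_sub_le {α B ε : ℝ} (hα : 0 < α) (hm : hOrder α ≤ m)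
    {f : (Fin p → ℝ) → ℝ} (hf : IsHolder p α B f) {c x : Fin p → ℝ} (hc : c ∈ cube p)
    (hx : x ∈ cube p) {ξ : (Fin p → Fin (m + 1)) → ℝ} (hε : 0 ≤ ε)
    (hξ : ∀ s ∈ mIdx p m, |ξ s| ≤ B)
    (hξ' : ∀ s ∈ mIdx p m, deg s ≤ hOrder α → |ξ s - taylorCoeff f c (fun j => s j)| ≤ ε) :
    |localPoly ξ (x - c) - f x| ≤
      (mIdx p m).card * ε + ((mIdx p m).card * B + taylorConst p α B) * ‖x - c‖ ^ α := by
  have hB : 0 ≤ B := hf.envelope_nonneg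
  have hnorm : ‖x - c‖ ≤ 1 := norm_sub_le_one_of_mem_cube hx hc
  have hpow : ‖x - c‖ ^ (hOrder α + 1) ≤ ‖x - c‖ ^ α := by
    rw [← Real.rpow_natCast]
    exact Real.rpow_le_rpow_of_exponent_ge' (norm_nonneg _) hnorm hα.le
      (by exact_mod_cast le_hOrder_add_one α)
  calc |localPoly ξ (x - c) - f x|
      ≤ |localPoly ξ (x - c) - taylorPoly (hOrder α) f c (x - c)| +
          |taylorPoly (hOrder α) f c (x - c) - f x| := abs_sub_le _ _ _
    _ ≤ (mIdx p m).card * (ε + B * ‖x - c‖ ^ (hOrder α + 1)) +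
          taylorConst p α B * ‖x - c‖ ^ α := by
        rw [abs_sub_comm _ (f x)]
        exact add_le_add (abs_localPoly_sub_taylorPoly_le hm hnorm hB hε hξ hξ')
          (hf.abs_sub_taylorPoly_le hα hc hx)
    _ ≤ (mIdx p m).card * (ε + B * ‖x - c‖ ^ α) + taylorConst p α B * ‖x - c‖ ^ α := by gcongr
    _ = _ := by ring

end LocalPolynomial

section Blocks

variable {p K : ℕ} {k : Fin p → Fin K} {x y : Fin p → ℝ}

lemma block_subset_blockCl (k : Fin p → Fin K) : block K k ⊆ blockCl K k :=
  fun _ hx j => ⟨(hx j).1.le, (hx j).2⟩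

lemma center_mem_blockCl (k : Fin p → Fin K) : center K k ∈ blockCl K k := by
  intro j
  have hcenter : center K k j = ((k j : ℕ) + 1 / 2) / K := by
    rw [center, mul_comm 2 (K : ℝ), ← div_div, div_right_comm]
    ring
  rw [hcenter]
  constructor <;> gcongr <;> linarith

lemma blockCl_subset_cube (k : Fin p → Fin K) : blockCl K k ⊆ cube p := by
  intro x hx j
  have hk : ((k j : ℕ) : ℝ) + 1 ≤ K := mod_cast (k j).2
  exact ⟨le_trans (by positivity) (hx j).1, (hx j).2.trans (div_le_one_of_le₀ hk (by positivity))⟩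

lemma norm_sub_le_of_mem_blockCl (hx : x ∈ blockCl K k) (hy : y ∈ blockCl K k) :
    ‖x - y‖ ≤ (K : ℝ)⁻¹ := by
  refine (pi_norm_le_iff_of_nonneg (by positivity)).2 fun j => abs_le.2 ?_
  have hxj := hx j
  have hyj := hy j
  rw [add_div, one_div] at hxj hyj
  constructor <;> simp only [Pi.sub_apply] <;> linarith

lemma exists_mem_blockCl (hK : 0 < K) (hx : x ∈ cube p) :
    ∃ k : Fin p → Fin K, x ∈ blockCl K k := by
  have hK' : (0 : ℝ) < K := mod_cast hK
  have hcoord (j : Fin p) : ∃ i : Fin K, ((i : ℕ) : ℝ) / K ≤ x j ∧ x j ≤ ((i : ℕ) + 1) / K := by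
    simp only [div_le_iff₀ hK', le_div_iff₀ hK']
    have hnonneg : 0 ≤ x j * K := mul_nonneg (hx j).1 hK'.le
    rcases (hx j).2.eq_or_lt with hone | hlt
    · refine ⟨⟨K - 1, Nat.sub_one_lt hK.ne'⟩, ?_⟩
      simp [hone, Nat.cast_sub (Nat.one_le_of_lt hK)]
    · refine ⟨⟨⌊x j * K⌋₊, (Nat.floor_lt hnonneg).2 (mul_lt_of_lt_one_left hK' hlt)⟩, ?_⟩
      exact ⟨Nat.floor_le hnonneg, (Nat.lt_floor_add_one _).le⟩
  choose k hk using hcoord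
  exact ⟨k, hk⟩

end Blocks

section Weights

variable {p K m : ℕ} {φ : (Fin p → ℝ) → ℝ} {h : ℝ} {μ : (Fin p → Fin K) → Fin p → ℝ}
  {x : Fin p → ℝ}

lemma weight_nonneg (hφ : ∀ u, 0 ≤ φ u) (k : Fin p → Fin K) : 0 ≤ weight φ K h μ k x :=
  div_nonneg (hφ _) (Finset.sum_nonneg fun _ _ => hφ _)

lemma sum_weight_eq_one (hφ : ∀ u, 0 ≤ φ u) (hφpos : ∀ u, ‖u‖ < 1 → 0 < φ u) (hK : 0 < K)
    (hh : 1 < K * h) (hμ : ∀ k, μ k ∈ blockCl K k) (hx : x ∈ cube p) :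
    ∑ k, weight φ K h μ k x = 1 := by
  have hK' : (0 : ℝ) < K := mod_cast hK
  have hKh : (K : ℝ)⁻¹ < h := (inv_lt_iff_one_lt_mul₀' hK').2 hh
  have hh₀ : 0 < h := (inv_pos.2 hK').trans hKh
  obtain ⟨k, hk⟩ := exists_mem_blockCl hK hx
  have hnear : ‖h⁻¹ • (x - μ k)‖ < 1 := by
    rw [norm_smul, norm_inv, Real.norm_of_nonneg hh₀.le, inv_mul_lt_one₀ hh₀]
    exact (norm_sub_le_of_mem_blockCl hk (hμ k)).trans_lt hKh
  have hφk : 0 < φ fun j => (x j - μ k j) / h := by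
    convert hφpos _ hnear using 2
    exact funext fun j => div_eq_inv_mul _ _
  simp only [weight]
  rw [← Finset.sum_div, div_self]
  exact (Finset.sum_pos' (fun l _ => hφ fun j => (x j - μ l j) / h)
    ⟨k, Finset.mem_univ k, hφk⟩).ne'

lemma norm_sub_le_of_weight_ne_zero (hφ : ∀ u, 1 < ‖u‖ → φ u = 0) (hh : 0 < h)
    {k : Fin p → Fin K} (hw : weight φ K h μ k x ≠ 0) : ‖x - μ k‖ ≤ h := by
  by_contra! hfar
  have hscaled : 1 < ‖h⁻¹ • (x - μ k)‖ := by
    rwa [norm_smul, norm_inv, Real.norm_of_nonneg hh.le, one_lt_inv_mul₀ hh]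
  refine hw ?_
  rw [weight, div_eq_zero_iff]
  left
  convert hφ _ hscaled using 2
  exact funext fun j => div_eq_inv_mul _ _

lemma norm_sub_center_le_of_weight_ne_zero (hφ : ∀ u, 1 < ‖u‖ → φ u = 0) (hh : 0 < h)
    (hK : 0 < K) {H : ℝ} (hH : K * h ≤ H) {k : Fin p → Fin K} (hμ : μ k ∈ blockCl K k)
    (hw : weight φ K h μ k x ≠ 0) : ‖x - center K k‖ ≤ (H + 1) * (K : ℝ)⁻¹ := by
  have hK' : (0 : ℝ) < K := mod_cast hK
  calc ‖x - center K k‖ ≤ ‖x - μ k‖ + ‖μ k - center K k‖ := norm_sub_le_norm_sub_add_norm_sub ..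
    _ ≤ h + (K : ℝ)⁻¹ := add_le_add (norm_sub_le_of_weight_ne_zero hφ hh hw)
        (norm_sub_le_of_mem_blockCl hμ (center_mem_blockCl k))
    _ ≤ (H + 1) * (K : ℝ)⁻¹ := by
        rw [add_one_mul, ← div_eq_mul_inv]
        gcongr
        rwa [le_div_iff₀ hK', mul_comm]

lemma kmpFun_eq_sum_weight_mul_localPoly (ξ : (Fin p → Fin K) → (Fin p → Fin (m + 1)) → ℝ) :
    kmpFun φ K m h μ ξ x =
      ∑ k, weight φ K h μ k x * localPoly (ξ k) (x - center K k) := by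
  refine Finset.sum_congr rfl fun k _ => ?_
  rw [localPoly, Finset.mul_sum]
  refine Finset.sum_congr rfl fun s _ => ?_
  rw [mul_left_comm, mul_assoc]
  rfl

lemma abs_kmpFun_sub_le (hφ : ∀ u, 0 ≤ φ u) (hsum : ∑ k, weight φ K h μ k x = 1)
    {ξ : (Fin p → Fin K) → (Fin p → Fin (m + 1)) → ℝ} {y δ : ℝ}
    (hδ : ∀ k, weight φ K h μ k x ≠ 0 → |localPoly (ξ k) (x - center K k) - y| ≤ δ) :
    |kmpFun φ K m h μ ξ x - y| ≤ δ := by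
  have hexpand : kmpFun φ K m h μ ξ x - y =
      ∑ k, weight φ K h μ k x * (localPoly (ξ k) (x - center K k) - y) := by
    simp only [mul_sub, Finset.sum_sub_distrib, ← Finset.sum_mul, hsum, one_mul,
      kmpFun_eq_sum_weight_mul_localPoly]
  calc |kmpFun φ K m h μ ξ x - y|
      ≤ ∑ k, |weight φ K h μ k x * (localPoly (ξ k) (x - center K k) - y)| :=
        hexpand ▸ Finset.abs_sum_le_sum_abs _ _
    _ ≤ ∑ k, weight φ K h μ k x * δ := by
        refine Finset.sum_le_sum fun k _ => ?_
        rw [abs_mul, abs_of_nonneg (weight_nonneg hφ k)]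
        rcases eq_or_ne (weight φ K h μ k x) 0 with hw | hw
        · rw [hw, zero_mul, zero_mul]
        · exact mul_le_mul_of_nonneg_left (hδ k hw) (weight_nonneg hφ k)
    _ = δ := by rw [← Finset.sum_mul, hsum, one_mul]

lemma measurable_kmpFun (hφ : Measurable φ) (ξ : (Fin p → Fin K) → (Fin p → Fin (m + 1)) → ℝ) :
    Measurable (kmpFun φ K m h μ ξ) := by
  unfold kmpFun weight mono
  fun_prop

end Weights

section Approximation

variable {p m : ℕ}

/-- The constant of the sup-norm approximation bound for kernel mixtures with `K h ≤ H`. -/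
def approxConst (p m : ℕ) (α B H : ℝ) : ℝ :=
  (mIdx p m).card + ((mIdx p m).card * B + taylorConst p α B) * (H + 1) ^ α

lemma inv_rpow_le_of_rpow_le {α ε K : ℝ} (hα : 0 < α) (hε : 0 < ε) (hK : ε ^ (-1 / α) ≤ K) :
    K⁻¹ ^ α ≤ ε := by
  have hpos : 0 < ε ^ (-1 / α) := Real.rpow_pos_of_pos hε _
  calc K⁻¹ ^ α = K ^ (-α) := by
        rw [Real.inv_rpow (hpos.trans_le hK).le, Real.rpow_neg (hpos.trans_le hK).le]
    _ ≤ (ε ^ (-1 / α)) ^ (-α) := Real.rpow_le_rpow_of_nonpos hpos hK (neg_nonpos.2 hα.le)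
    _ = ε := by
        rw [← Real.rpow_mul hε.le, div_mul_eq_mul_div, neg_mul_neg, one_mul, div_self hα.ne',
          Real.rpow_one]

lemma IsHolder.abs_kmpFun_sub_le {α B H ε h : ℝ} (hα : 0 < α) (hm : hOrder α ≤ m)
    {φ : (Fin p → ℝ) → ℝ} (hφ₀ : ∀ u, 0 ≤ φ u) (hφsupp : ∀ u, 1 < ‖u‖ → φ u = 0)
    (hφpos : ∀ u, ‖u‖ < 1 → 0 < φ u) {f : (Fin p → ℝ) → ℝ} (hf : IsHolder p α B f) (hε : 0 < ε)
    {K : ℕ} (hK : ε ^ (-1 / α) ≤ K) (hh : 1 < K * h) (hH : K * h ≤ H)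
    {μ : (Fin p → Fin K) → Fin p → ℝ} (hμ : ∀ k, μ k ∈ blockCl K k)
    {ξ : (Fin p → Fin K) → (Fin p → Fin (m + 1)) → ℝ} (hξ : ∀ k, ∀ s ∈ mIdx p m, |ξ k s| ≤ B)
    (hξ' : ∀ k, ∀ s ∈ mIdx p m, deg s ≤ hOrder α →
      |ξ k s - taylorCoeff f (center K k) (fun j => s j)| ≤ ε)
    {x : Fin p → ℝ} (hx : x ∈ cube p) :
    |kmpFun φ K m h μ ξ x - f x| ≤ approxConst p m α B H * ε := by
  have hK' : (0 : ℝ) < K := (Real.rpow_pos_of_pos hε _).trans_le hK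
  have hKpos : 0 < K := mod_cast hK'
  have hh₀ : 0 < h := pos_of_mul_pos_right (one_pos.trans hh) hK'.le
  have hB : 0 ≤ B := hf.envelope_nonneg
  have hH₀ : 0 ≤ H + 1 := by linarith
  refine KMP.abs_kmpFun_sub_le hφ₀ (sum_weight_eq_one hφ₀ hφpos hKpos hh hμ hx) fun k hw => ?_
  have hdist : ‖x - center K k‖ ^ α ≤ (H + 1) ^ α * ε :=
    calc ‖x - center K k‖ ^ α ≤ ((H + 1) * (K : ℝ)⁻¹) ^ α :=
          Real.rpow_le_rpow (norm_nonneg _)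
            (norm_sub_center_le_of_weight_ne_zero hφsupp hh₀ hKpos hH (hμ k) hw) hα.le
      _ = (H + 1) ^ α * (K : ℝ)⁻¹ ^ α := Real.mul_rpow hH₀ (by positivity)
      _ ≤ (H + 1) ^ α * ε := by
          gcongr
          exact inv_rpow_le_of_rpow_le hα hε hK
  have hconst : 0 ≤ (mIdx p m).card * B + taylorConst p α B := by
    unfold taylorConst
    positivity
  calc |localPoly (ξ k) (x - center K k) - f x|
      ≤ (mIdx p m).card * ε +
          ((mIdx p m).card * B + taylorConst p α B) * ‖x - center K k‖ ^ α :=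
        hf.abs_localPoly_sub_le hα hm (blockCl_subset_cube k (center_mem_blockCl k)) hx hε.le
          (hξ k) (hξ' k)
    _ ≤ (mIdx p m).card * ε +
          ((mIdx p m).card * B + taylorConst p α B) * ((H + 1) ^ α * ε) := by gcongr
    _ = approxConst p m α B H * ε := by
        rw [approxConst]
        ring

end Approximation

section WeightedSquares

variable {X : Type*} [MeasurableSpace X] {ν : Measure X} {s : Set X} {g w : X → ℝ} {M W : ℝ}

lemma norm_sq_mul_le {a b : ℝ} (ha : |a| ≤ M) (hb : |b| ≤ W) : ‖a ^ 2 * b‖ ≤ M ^ 2 * W := by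
  rw [norm_mul, norm_pow]
  exact mul_le_mul (pow_le_pow_left₀ (abs_nonneg a) ha 2) hb (abs_nonneg b) (sq_nonneg M)

lemma integrableOn_sq_mul (hs : MeasurableSet s) (hνs : ν s ≠ ∞) (hg : Measurable g)
    (hw : Measurable w) (hgM : ∀ x ∈ s, |g x| ≤ M) (hwW : ∀ x ∈ s, |w x| ≤ W) :
    IntegrableOn (fun x => g x ^ 2 * w x) s ν :=
  Measure.integrableOn_of_bounded hνs ((hg.pow_const 2).mul hw).aestronglyMeasurable
    (ae_restrict_of_forall_mem hs fun x hx => norm_sq_mul_le (hgM x hx) (hwW x hx))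

lemma setIntegral_sq_mul_le (hνs : ν s ≠ ∞) (hgM : ∀ x ∈ s, |g x| ≤ M)
    (hwW : ∀ x ∈ s, |w x| ≤ W) : ∫ x in s, g x ^ 2 * w x ∂ν ≤ M ^ 2 * W * ν.real s :=
  (le_abs_self _).trans (norm_setIntegral_le_of_norm_le_const hνs.lt_top
    fun x hx => norm_sq_mul_le (hgM x hx) (hwW x hx))

lemma volume_cube (p : ℕ) : volume (cube p) = 1 := by
  simp [cube_eq_Icc, Real.volume_Icc_pi]

end WeightedSquares

theorem statement5_general {p m : ℕ} (α B H pmax : ℝ) (hα : 0 < α) (hm : α ≤ m + 1) :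
    ∃ C₁ : ℝ, 0 < C₁ ∧
      ∀ φ : (Fin p → ℝ) → ℝ, Measurable φ → (∀ u, 0 ≤ φ u) → (∀ u, 1 < ‖u‖ → φ u = 0) →
        (∀ u, ‖u‖ < 1 → 0 < φ u) →
      ∀ px : (Fin p → ℝ) → ℝ, Measurable px → (∀ x ∈ cube p, |px x| ≤ pmax) →
      ∀ f₀ : (Fin p → ℝ) → ℝ, IsHolder p α B f₀ →
      ∀ ε : ℝ, 0 < ε →
      ∀ K : ℕ, ε ^ (-1 / α) ≤ (K : ℝ) →
      ∀ h : ℝ, 1 < K * h → K * h ≤ H →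
      ∀ μ : (Fin p → Fin K) → Fin p → ℝ, (∀ k, μ k ∈ blockCl K k) →
      ∀ ξ : (Fin p → Fin K) → (Fin p → Fin (m + 1)) → ℝ,
        (∀ k, ∀ s ∈ mIdx p m, |ξ k s| ≤ B) →
        (∀ k, ∀ s ∈ mIdx p m, deg s ≤ hOrder α →
          |ξ k s - taylorCoeff f₀ (center K k) (fun j => s j)| ≤ ε) →
        IntegrableOn (fun x => (kmpFun φ K m h μ ξ x - f₀ x) ^ 2 * px x) (cube p) ∧
          ∫ x in cube p, (kmpFun φ K m h μ ξ x - f₀ x) ^ 2 * px x < C₁ * ε ^ 2 := by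
  refine ⟨approxConst p m α B H ^ 2 * |pmax| + 1, by positivity, ?_⟩
  intro φ hφm hφ₀ hφsupp hφpos px hpxm hpx f₀ hf ε hε K hK h hh hH μ hμ ξ hξ hξ'
  have hm' : hOrder α ≤ m := Nat.ceil_le.2 (sub_le_iff_le_add.2 hm)
  have herror : ∀ x ∈ cube p, |kmpFun φ K m h μ ξ x - f₀ x| ≤ approxConst p m α B H * ε :=
    fun x hx => hf.abs_kmpFun_sub_le hα hm' hφ₀ hφsupp hφpos hε hK hh hH hμ hξ hξ' hx
  have hpx' : ∀ x ∈ cube p, |px x| ≤ |pmax| := fun x hx => (hpx x hx).trans (le_abs_self pmax)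
  have hvol : volume (cube p) ≠ ∞ := by simp [volume_cube]
  have hcube : MeasurableSet (cube p) := cube_eq_Icc p ▸ measurableSet_Icc
  refine ⟨integrableOn_sq_mul hcube hvol
    ((measurable_kmpFun hφm ξ).sub hf.1.continuous.measurable) hpxm herror hpx', ?_⟩
  calc ∫ x in cube p, (kmpFun φ K m h μ ξ x - f₀ x) ^ 2 * px x
      ≤ (approxConst p m α B H * ε) ^ 2 * |pmax| * volume.real (cube p) :=
        setIntegral_sq_mul_le hvol herror hpx'
    _ < (approxConst p m α B H ^ 2 * |pmax| + 1) * ε ^ 2 := by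
        rw [measureReal_def, volume_cube, ENNReal.toReal_one]
        linarith [pow_pos hε 2]

/-- Approximation lemma: if `K ≥ ε^{-1/α}` and the coefficients of a kernel
mixture of polynomials are within `ε` of the scaled Taylor coefficients
`D^s f₀(μ_k^⋆)/s!` of an α-Hölder `f₀` (envelope `B`), then the squared-`L₂(P_x)`
distance is at most `C₁ ε²`, where `C₁` depends only on `α, B, p, m, h̲, h̄, p̄`. -/
theorem statement5 {p m : ℕ} (hp : 0 < p) (α B : ℝ) (hα : 0 < α) (hB : 0 < B)
    (hm : α ≤ (m : ℝ)) (hmin hmax : ℝ) (hh1 : 1 < hmin) (hh2 : hmin < hmax)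
    (φ : (Fin p → ℝ) → ℝ) (hφ : IsBoxedKernel φ)
    (hφpos : ∀ u : Fin p → ℝ, ‖u‖ < 1 → 0 < φ u)
    (px : (Fin p → ℝ) → ℝ) (hpxm : Measurable px) (pmax : ℝ)
    (hpx : ∀ x ∈ cube p, 0 ≤ px x ∧ px x ≤ pmax) :
    ∃ C₁ : ℝ, 0 < C₁ ∧ ∃ ε₀ : ℝ, 0 < ε₀ ∧
      ∀ f₀ : (Fin p → ℝ) → ℝ, IsHolder p α B f₀ →
      ∀ ε : ℝ, 0 < ε → ε < ε₀ →
      ∀ K : ℕ, ε ^ (-1 / α) ≤ (K : ℝ) →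
      ∀ h : ℝ, (K : ℝ) * h ∈ Set.Icc hmin hmax →
      ∀ μ : (Fin p → Fin K) → Fin p → ℝ, (∀ k, μ k ∈ block K k) →
      ∀ ξ : (Fin p → Fin K) → (Fin p → Fin (m + 1)) → ℝ,
        (∀ k, ∀ s ∈ mIdx p m, |ξ k s| ≤ B) →
        (∀ k, ∀ s ∈ mIdx p m, deg s ≤ hOrder α →
          |ξ k s - mderiv (fun j => (s j : ℕ)) f₀ (center K k) /
              ∏ j, (Nat.factorial (s j : ℕ) : ℝ)| ≤ ε) →
        ∫ x in cube p, (kmpFun φ K m h μ ξ x - f₀ x) ^ 2 * px x < C₁ * ε ^ 2 := by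
  obtain ⟨C₁, hC₁, happrox⟩ := statement5_general (p := p) (m := m) α B hmax pmax hα (by linarith)
  exact ⟨C₁, hC₁, 1, one_pos, fun f₀ hf ε hε _ K hK h hh μ hμ ξ hξ hξ' =>
    (happrox φ hφ.1.measurable (fun u => (hφ.2.1 u).1) hφ.2.2.1 hφpos px hpxm
      (fun x hx => abs_le.2 ⟨by linarith [hpx x hx], (hpx x hx).2⟩) f₀ hf ε hε K hK h
      (hh1.trans_le hh.1) hh.2 μ (fun k => block_subset_blockCl k (hμ k)) ξ hξ hξ').2⟩

end KMP
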